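/- There exists a simultaneous transition instance (with overlap-free labelings L₁ and L₂) containing a moving label with a diagonal movement that overlaps 12 other moving labels during the transition; hence the bound of 12 overlapping moving labels per diagonally moving label, and consequently the bound of 6n total overlaps, is tight. -/

import Mathlib

open Set

/-- The closed axis-aligned unit square with lower-left corner `a`. -/
def unitSq (a : ℝ × ℝ) : Set (ℝ × ℝ) :=
  Set.Icc a.1 (a.1 + 1) ×ˢ Set.Icc a.2 (a.2 + 1)

/-- Two unit squares, given by their lower-left corners, overlap if their interiors intersect. -/
def Overlap (a b : ℝ × ℝ) : Prop :=
  (interior (unitSq a) ∩ interior (unitSq b)).Nonempty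

/-- `a` is the lower-left corner of one of the four candidate positions of point `p`
(the four closed unit squares having `p` as a corner). -/
def IsCandidate (p a : ℝ × ℝ) : Prop :=
  a = p ∨ a = (p.1 - 1, p.2) ∨ a = (p.1, p.2 - 1) ∨ a = (p.1 - 1, p.2 - 1)

/-- Two unit squares (given by lower-left corners) share an edge. -/
def SharesEdge (a b : ℝ × ℝ) : Prop :=
  (a.1 = b.1 ∧ (a.2 - b.2 = 1 ∨ b.2 - a.2 = 1)) ∨
  (a.2 = b.2 ∧ (a.1 - b.1 = 1 ∨ b.1 - a.1 = 1))

/-- A movement of the unit-square label of point `p` from candidate position `S` to candidate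
position `E`.  If `S` and `E` share an edge (a non-diagonal movement) we set `I = E` and the
label translates directly from `S` to `E`; if `S` and `E` are diagonally opposite (a diagonal
movement) the label translates through the specified intermediate candidate position `I`,
which shares an edge with both `S` and `E`. -/
structure Movement where
  p : ℝ × ℝ
  S : ℝ × ℝ
  I : ℝ × ℝ
  E : ℝ × ℝ
  candS : IsCandidate p S
  candI : IsCandidate p I
  candE : IsCandidate p E
  legs : (I = E ∧ SharesEdge S E) ∨
    (SharesEdge S I ∧ SharesEdge I E ∧ S.1 ≠ E.1 ∧ S.2 ≠ E.2)

/-- A movement is diagonal if the start and end positions are diagonally opposite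
(equivalently, the intermediate position differs from the end position). -/
def Movement.Diagonal (m : Movement) : Prop := m.I ≠ m.E

/-- Position (lower-left corner) of a moving label at time `t` after the start of its movement:
unit-speed axis-aligned translation, one unit of time per axis-aligned leg; the label rests at
its start position before the movement begins and at its end position after it is finished. -/
noncomputable def Movement.pos (m : Movement) (t : ℝ) : ℝ × ℝ :=
  if t ≤ 0 then m.S
  else if t ≤ 1 then m.S + t • (m.I - m.S)
  else if t ≤ 2 then m.I + (t - 1) • (m.E - m.I)
  else m.E

/-- Duration of a movement: one unit of time per axis-aligned translation. -/
noncomputable def Movement.dur (m : Movement) : ℝ := if m.I = m.E then 1 else 2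

/-- A transition instance: finitely many stationary labels (given by their lower-left corners)
and `n` moving labels, each with a prescribed movement, such that the labeling `L₁` formed by
the stationary labels together with the start positions of the moving labels is overlap-free,
and the labeling `L₂` formed by the stationary labels together with the end positions of the
moving labels is overlap-free. -/
structure TransitionInstance (k n : ℕ) where
  stat : Fin k → ℝ × ℝ
  mov : Fin n → Movement
  free_start : ∀ a b : Fin k ⊕ Fin n, a ≠ b →
    ¬ Overlap (Sum.elim stat (fun j => (mov j).S) a)
      (Sum.elim stat (fun j => (mov j).S) b)
  free_end : ∀ a b : Fin k ⊕ Fin n, a ≠ b →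
    ¬ Overlap (Sum.elim stat (fun j => (mov j).E) a)
      (Sum.elim stat (fun j => (mov j).E) b)

/-- A schedule `τ` of starting times is consecutive if the execution intervals of the movements
are pairwise non-overlapping, i.e. the movements are executed one after another in some order. -/
def Consecutive {k n : ℕ} (T : TransitionInstance k n) (τ : Fin n → ℝ) : Prop :=
  ∀ i j : Fin n, i ≠ j →
    τ i + (T.mov i).dur ≤ τ j ∨ τ j + (T.mov j).dur ≤ τ i

/-- Position (lower-left corner) of each label at global time `t`, when moving label `j`
starts its movement at time `τ j`; stationary labels never move. -/
noncomputable def traj {k n : ℕ} (T : TransitionInstance k n) (τ : Fin n → ℝ) (t : ℝ) :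
    Fin k ⊕ Fin n → ℝ × ℝ :=
  Sum.elim T.stat (fun j => (T.mov j).pos (t - τ j))

/-- The number of overlaps during the transition: the number of unordered pairs of distinct
labels whose interiors intersect at some moment. -/
noncomputable def overlapCount {k n : ℕ} (T : TransitionInstance k n) (τ : Fin n → ℝ) : ℕ :=
  Set.ncard {q : Sym2 (Fin k ⊕ Fin n) | ∃ a b : Fin k ⊕ Fin n,
    q = s(a, b) ∧ a ≠ b ∧ ∃ t : ℝ, Overlap (traj T τ t a) (traj T τ t b)}

theorem overlap_iff (a b : ℝ × ℝ) :
    Overlap a b ↔ |a.1 - b.1| < 1 ∧ |a.2 - b.2| < 1 := by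
  unfold Overlap unitSq
  rw [interior_prod_eq, interior_prod_eq, interior_Icc, interior_Icc, interior_Icc, interior_Icc,
    Set.prod_inter_prod, Set.prod_nonempty_iff, Set.Ioo_inter_Ioo, Set.Ioo_inter_Ioo,
    Set.nonempty_Ioo, Set.nonempty_Ioo]
  simp only [abs_lt, max_lt_iff, lt_min_iff]
  constructor
  · rintro ⟨⟨⟨_, _⟩, _, _⟩, ⟨_, _⟩, _, _⟩
    refine ⟨⟨?_, ?_⟩, ?_, ?_⟩ <;> linarith
  · rintro ⟨⟨_, _⟩, _, _⟩
    refine ⟨⟨⟨?_, ?_⟩, ?_, ?_⟩, ⟨?_, ?_⟩, ?_, ?_⟩ <;> linarith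

/-- Point of the grid of mesh `1/5`. -/
noncomputable def gridPt (z : ℤ × ℤ) : ℝ × ℝ := ((z.1 : ℝ) / 5, (z.2 : ℝ) / 5)

theorem grid_not_overlap (a b : ℤ × ℤ) (h : 5 ≤ |a.1 - b.1| ∨ 5 ≤ |a.2 - b.2|) :
    ¬ Overlap (gridPt a) (gridPt b) := by
  rw [overlap_iff]
  simp only [gridPt, ← sub_div, abs_div]
  rintro ⟨h1, h2⟩
  rw [abs_of_pos (by norm_num : (0 : ℝ) < 5), div_lt_one (by norm_num)] at h1 h2
  norm_cast at h1 h2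
  omega

/-- Start, intermediate and end positions, in units of `1/5`. -/
def startData : Fin 13 → ℤ × ℤ := ![(0, 0), (-1, -8), (-1, 7), (3, 12), (4, -9), (4, 6), (5, -4), (8, 11), (9, -9), (9, 1), (9, 6), (10, -4), (14, 5)]
def midData : Fin 13 → ℤ × ℤ := ![(5, 0), (-1, -3), (-1, 2), (3, 7), (4, -4), (4, 1), (5, -9), (8, 6), (9, -4), (9, -4), (9, 1), (5, -4), (14, 0)]
def endData : Fin 13 → ℤ × ℤ := ![(5, 5), (-6, -3), (-6, 2), (-2, 7), (-1, -4), (-1, 1), (10, -9), (13, 6), (4, -4), (14, -4), (14, 1), (5, -9), (9, 0)]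
/-- Witness times of overlap with label `0`, in units of `1/10`. -/
def timeData : Fin 13 → ℤ := ![20, 7, 6, 15, 10, 10, 1, 13, 10, 10, 10, 10, 19]

theorem gridCand (p a : ℤ × ℤ)
    (h : a = p ∨ a = (p.1 - 5, p.2) ∨ a = (p.1, p.2 - 5) ∨ a = (p.1 - 5, p.2 - 5)) :
    IsCandidate (gridPt p) (gridPt a) := by
  unfold IsCandidate gridPt
  rcases h with rfl | rfl | rfl | rfl
  · left; rfl
  · right; left; ext <;> push_cast <;> ring
  · right; right; left; ext <;> push_cast <;> ring
  · right; right; right; ext <;> push_cast <;> ring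

theorem gridEdge (a b : ℤ × ℤ)
    (h : (a.1 = b.1 ∧ (a.2 - b.2 = 5 ∨ b.2 - a.2 = 5)) ∨
      (a.2 = b.2 ∧ (a.1 - b.1 = 5 ∨ b.1 - a.1 = 5))) :
    SharesEdge (gridPt a) (gridPt b) := by
  unfold SharesEdge gridPt
  simp only [← sub_div]
  have key : ∀ x y : ℤ, x - y = 5 → ((x : ℝ) - y) / 5 = 1 := by
    intro x y hxy
    rw [← Int.cast_sub, hxy]; norm_num
  rcases h with ⟨h, h' | h'⟩ | ⟨h, h' | h'⟩
  · exact Or.inl ⟨by rw [h], Or.inl (key _ _ h')⟩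
  · exact Or.inl ⟨by rw [h], Or.inr (key _ _ h')⟩
  · exact Or.inr ⟨by rw [h], Or.inl (key _ _ h')⟩
  · exact Or.inr ⟨by rw [h], Or.inr (key _ _ h')⟩

/-- The common corner of the candidate positions of label `i`. -/
def ptData (i : Fin 13) : ℤ × ℤ :=
  (max (startData i).1 (endData i).1, max (startData i).2 (endData i).2)

theorem grid_ne (x y : ℤ) (h : x ≠ y) : (x : ℝ) / 5 ≠ (y : ℝ) / 5 := by
  intro hc
  apply h
  have : (x : ℝ) = y := by linarith
  exact_mod_cast this

/-- The thirteen movements. -/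
noncomputable def movData (i : Fin 13) : Movement where
  p := gridPt (ptData i)
  S := gridPt (startData i)
  I := gridPt (midData i)
  E := gridPt (endData i)
  candS := gridCand _ _ (by revert i; decide)
  candI := gridCand _ _ (by revert i; decide)
  candE := gridCand _ _ (by revert i; decide)
  legs := Or.inr ⟨gridEdge _ _ (by revert i; decide), gridEdge _ _ (by revert i; decide),
    grid_ne _ _ (by revert i; decide), grid_ne _ _ (by revert i; decide)⟩

/-- The instance: no stationary labels and thirteen moving labels. -/
noncomputable def tightInstance : TransitionInstance 0 13 where
  stat := Fin.elim0
  mov := movData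
  free_start := by
    rintro (a | a) (b | b) h
    · exact a.elim0
    · exact a.elim0
    · exact b.elim0
    · have h' : a ≠ b := fun hc => h (by rw [hc])
      clear h
      exact grid_not_overlap _ _ (by revert a b; decide)
  free_end := by
    rintro (a | a) (b | b) h
    · exact a.elim0
    · exact a.elim0
    · exact b.elim0
    · have h' : a ≠ b := fun hc => h (by rw [hc])
      clear h
      exact grid_not_overlap _ _ (by revert a b; decide)

theorem overlap_zero (a : Fin 13) :
    Overlap ((movData a).pos ((timeData a : ℝ) / 10)) ((movData 0).pos ((timeData a : ℝ) / 10)) := by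
  rw [overlap_iff]
  fin_cases a <;>
    norm_num [Movement.pos, movData, gridPt, startData, midData, endData, timeData, abs_lt]

/-- There exists a simultaneous transition instance containing a moving label with a diagonal
movement that overlaps `12` other moving labels during the transition; hence the bound of `12`
overlapping moving labels per diagonally moving label is tight. -/
theorem simultaneous_diagonal_degree_tight :
    ∃ (k n : ℕ) (T : TransitionInstance k n) (j : Fin n),
      (T.mov j).Diagonal ∧
      {a : Fin n | a ≠ j ∧
        ∃ t : ℝ, Overlap ((T.mov a).pos t) ((T.mov j).pos t)}.ncard = 12 := by
  refine ⟨0, 13, tightInstance, 0, ?_, ?_⟩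
  · intro h
    have h2 := congrArg Prod.snd h
    norm_num [tightInstance, movData, gridPt, midData, endData] at h2
  · have hs : {a : Fin 13 | a ≠ 0 ∧ ∃ t : ℝ,
        Overlap ((tightInstance.mov a).pos t) ((tightInstance.mov 0).pos t)} =
        ((Finset.univ.erase (0 : Fin 13) : Finset (Fin 13)) : Set (Fin 13)) := by
      ext a
      simp only [Set.mem_setOf_eq, Finset.coe_erase, Finset.coe_univ, Set.mem_diff, Set.mem_univ,
        true_and, Set.mem_singleton_iff]
      exact ⟨fun h => h.1, fun h => ⟨h, _, overlap_zero a⟩⟩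
    rw [hs, Set.ncard_coe_finset]
    decide
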